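/- Let k ≤ n < 2k. If k is even then x(Q_{n/k}) = n/k, and if k is odd then x(Q_{n/k}) = (n+1)/(k+1). -/

import Mathlib

attribute [local instance] Classical.propDecidable

/-- A cut in a graph: the set of edges leaving some vertex set `W`. -/
def IsCut {V : Type*} (G : SimpleGraph V) (X : Set (Sym2 V)) : Prop :=
  ∃ W : Set V, X = {e | e ∈ G.edgeSet ∧ ∃ a b, e = s(a, b) ∧ a ∈ W ∧ b ∉ W}

/-- An `n/k`-cover: `n` cuts covering every edge at least `k` times. -/
def HasCover {V : Type*} (G : SimpleGraph V) (n k : ℕ) : Prop :=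
  ∃ X : Fin n → Set (Sym2 V), (∀ i, IsCut G (X i)) ∧
    ∀ e ∈ G.edgeSet, k ≤ (Finset.univ.filter fun i => e ∈ X i).card

/-- The fractional cut-covering number `x(G)`. -/
noncomputable def cutCover {V : Type*} (G : SimpleGraph V) : ℝ :=
  sInf { q : ℝ | ∃ n k : ℕ, 0 < k ∧ q = n / k ∧ HasCover G n k }

/-- The graph `Q_{n/k}` on `{0,1}^n`, with edges between vertices at Hamming distance `≥ k`. -/
def cubeGraph (n k : ℕ) : SimpleGraph (Fin n → Bool) :=
  SimpleGraph.fromRel (fun x y => k ≤ hammingDist x y)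

open Polynomial in
/-- Coefficient of `X^t` in `(1-X)^j (1+X)^m`. -/
noncomputable def kraw (j m t : ℕ) : ℤ := (((1 - X) ^ j * (1 + X) ^ m : ℤ[X])).coeff t

lemma kraw_zero_left (m t : ℕ) : kraw 0 m t = (m.choose t : ℤ) := by
  simp [kraw, Polynomial.coeff_one_add_X_pow]

lemma kraw_zero (j m : ℕ) : kraw j m 0 = 1 := by
  simp [kraw, Polynomial.coeff_zero_eq_eval_zero]

lemma kraw_succ_left (j m t : ℕ) : kraw (j + 1) m (t + 1) = kraw j m (t + 1) - kraw j m t := by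
  unfold kraw
  rw [← Polynomial.coeff_mul_X (n := t), ← Polynomial.coeff_sub]
  congr 1; ring

lemma kraw_succ_right (j m t : ℕ) : kraw j (m + 1) (t + 1) = kraw j m (t + 1) + kraw j m t := by
  unfold kraw
  rw [← Polynomial.coeff_mul_X (n := t), ← Polynomial.coeff_add]
  congr 1; ring

lemma kraw_large (j m t : ℕ) (h : j + m < t) : kraw j m t = 0 := by
  induction j generalizing t with
  | zero => rw [kraw_zero_left, Nat.choose_eq_zero_of_lt (by omega)]; rfl
  | succ j ih =>
    obtain ⟨t, rfl⟩ : ∃ s, t = s + 1 := ⟨t - 1, by omega⟩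
    rw [kraw_succ_left, ih _ (by omega), ih _ (by omega)]; rfl

lemma kraw_refl (j m a b : ℕ) (h : a + b = j + m) : kraw j m a = (-1) ^ j * kraw j m b := by
  induction j generalizing a b with
  | zero =>
    rw [kraw_zero_left, kraw_zero_left, Nat.choose_symm_of_eq_add (by omega : m = a + b)]
    simp
  | succ j ih =>
    rcases a with _ | a
    · obtain ⟨b, rfl⟩ : ∃ s, b = s + 1 := ⟨b - 1, by omega⟩
      have h0 := ih 0 b (by omega)
      rw [kraw_zero] at h0 ⊢
      rw [kraw_succ_left, kraw_large j m (b + 1) (by omega), pow_succ]; linarith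
    · rcases b with _ | b
      · have := ih a 0 (by omega)
        rw [kraw_zero] at *
        rw [kraw_succ_left, kraw_large j m (a + 1) (by omega), this]; ring
      · rw [kraw_succ_left, kraw_succ_left, ih (a + 1) b (by omega), ih a (b + 1) (by omega)]
        ring

lemma choose_step (N t : ℕ) :
    ((N : ℤ) + 1) * (N.choose t : ℤ) = (N + 1 - t) * ((N + 1).choose t : ℤ) := by
  rcases le_or_gt t (N + 1) with h | h
  · have := Nat.choose_mul_succ_eq N t
    zify [h] at this
    linarith
  · rw [Nat.choose_eq_zero_of_lt (by omega : N < t), Nat.choose_eq_zero_of_lt h]; simp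

/-- The arithmetic of the induction step. -/
lemma step_bound (N t : ℕ) (hN : 0 < N) (A B K : ℤ) (hK : |K| ≤ |A| + |B|)
    (hA : N * |A| ≤ (N - 2 * (t + 1)) * (N.choose (t + 1) : ℤ))
    (hB : N * |B| ≤ (N - 2 * t) * (N.choose t : ℤ)) :
    ((N : ℤ) + 1) * |K| ≤ (N + 1 - 2 * (t + 1)) * ((N + 1).choose (t + 1) : ℤ) := by
  have h1 := choose_step N (t + 1)
  have h2 : ((N : ℤ) + 1) * (N.choose t : ℤ) = (N + 1).choose (t + 1) * (t + 1) := by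
    exact_mod_cast Nat.add_one_mul_choose_eq N t
  have hN' : (0 : ℤ) < N := by exact_mod_cast hN
  have : (N : ℤ) * (((N : ℤ) + 1) * |K|) ≤
      N * ((N + 1 - 2 * (t + 1)) * ((N + 1).choose (t + 1) : ℤ)) := by
    calc (N : ℤ) * (((N : ℤ) + 1) * |K|) ≤ N * ((N + 1) * (|A| + |B|)) := by gcongr
      _ = (N + 1) * (N * |A|) + (N + 1) * (N * |B|) := by ring
      _ ≤ (N + 1) * ((N - 2 * (t + 1)) * (N.choose (t + 1) : ℤ)) +
          (N + 1) * ((N - 2 * t) * (N.choose t : ℤ)) := by gcongr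
      _ = (N - 2 * (t + 1)) * ((N + 1) * (N.choose (t + 1) : ℤ)) +
          (N - 2 * t) * ((N + 1) * (N.choose t : ℤ)) := by ring
      _ = _ := by rw [h1, h2]; push_cast; ring
  exact le_of_mul_le_mul_left this hN'

lemma kraw_bound (N : ℕ) : ∀ j m t : ℕ, j + m = N → 1 ≤ j → 1 ≤ m →
    (2 * t < N ∨ (2 * t = N ∧ Odd j)) →
    (N : ℤ) * |kraw j m t| ≤ (N - 2 * t) * (N.choose t : ℤ) := by
  induction N with
  | zero => intros; omega
  | succ N ih =>
    intro j m t hjm hj hm ht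
    rcases ht with ht | ⟨ht, hodd⟩
    swap
    · have h := kraw_refl j m t t (by omega)
      rw [hodd.neg_one_pow] at h
      have h0 : kraw j m t = 0 := by linarith
      have h3 : ((N + 1 : ℕ) : ℤ) = 2 * t := by exact_mod_cast ht.symm
      rw [h0, h3]; simp
    rcases t with _ | t
    · rw [kraw_zero]; simp
    have key : ∀ j' m' : ℕ, j' + m' = N → 1 ≤ j' → 1 ≤ m' →
        (2 * (t + 1) < N ∨ Odd j') → |kraw j m (t + 1)| ≤ |kraw j' m' (t + 1)| + |kraw j' m' t| →
        ((N + 1 : ℕ) : ℤ) * |kraw j m (t + 1)| ≤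
          ((N + 1 : ℕ) - 2 * (t + 1 : ℕ)) * ((N + 1).choose (t + 1) : ℤ) := by
      intro j' m' h1 h2 h3 h4 h5
      have hA := ih j' m' (t + 1) h1 h2 h3 (by
        rcases h4 with h4 | h4
        · exact Or.inl h4
        · rcases Nat.lt_or_ge (2 * (t + 1)) N with h | h
          · exact Or.inl h
          · exact Or.inr ⟨by omega, h4⟩)
      have hB := ih j' m' t h1 h2 h3 (Or.inl (by omega))
      have := step_bound N t (by omega) _ _ _ h5 (by exact_mod_cast hA) hB
      exact_mod_cast this
    obtain ⟨j, rfl⟩ : ∃ s, j = s + 1 := ⟨j - 1, by omega⟩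
    obtain ⟨m, rfl⟩ : ∃ s, m = s + 1 := ⟨m - 1, by omega⟩
    have hl : |kraw (j + 1) (m + 1) (t + 1)| ≤
        |kraw j (m + 1) (t + 1)| + |kraw j (m + 1) t| := by
      rw [kraw_succ_left]; exact abs_sub _ _
    have hr : |kraw (j + 1) (m + 1) (t + 1)| ≤
        |kraw (j + 1) m (t + 1)| + |kraw (j + 1) m t| := by
      rw [kraw_succ_right]; exact abs_add_le _ _
    rcases Nat.lt_or_ge (2 * (t + 1)) N with h | h
    · rcases Nat.eq_zero_or_pos j with h0 | h0
      · exact key (j + 1) m (by omega) (by omega) (by omega) (Or.inl h) hr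
      · exact key j (m + 1) (by omega) (by omega) (by omega) (Or.inl h) hl
    · rcases Nat.even_or_odd j with h0 | h0
      · obtain ⟨r, hr'⟩ := h0
        exact key (j + 1) m (by omega) (by omega) (by omega) (Or.inr ⟨r, by omega⟩) hr
      · have := h0.pos
        exact key j (m + 1) (by omega) (by omega) (by omega) (Or.inr h0) hl

/-- All Krawtchouk values are at least the one at `1`, for even `k`. -/
lemma kraw_lower (j m k : ℕ) (hk : Even k) (hkn : k ≤ j + m) (hn : j + m < 2 * k) :
    -((2 * k - (j + m : ℕ)) * ((j + m).choose k : ℤ)) ≤ (j + m : ℕ) * kraw j m k := by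
  have hpos : (0 : ℤ) ≤ (2 * k - (j + m : ℕ)) * ((j + m).choose k : ℤ) := by
    apply mul_nonneg
    · have : ((j + m : ℕ) : ℤ) < 2 * k := by exact_mod_cast hn
      linarith
    · positivity
  rcases Nat.eq_zero_or_pos j with rfl | hj
  · rw [kraw_zero_left]
    have : (0 : ℤ) ≤ ((0 + m : ℕ) : ℤ) * (m.choose k : ℤ) := by positivity
    linarith
  have hr := kraw_refl j m k (j + m - k) (by omega)
  rcases Nat.eq_zero_or_pos m with rfl | hm
  · have : kraw j 0 k = (j.choose k : ℤ) := by
      have h1 : kraw j 0 k = ((1 + Polynomial.X : Polynomial ℤ) ^ j).coeff k * (-1) ^ k := by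
        have : ((1 - Polynomial.X : Polynomial ℤ) ^ j) =
            ((1 + Polynomial.X : Polynomial ℤ) ^ j).comp (Polynomial.C (-1) * Polynomial.X) := by
          simp [sub_eq_add_neg]
        rw [kraw, pow_zero, mul_one, this, Polynomial.comp_C_mul_X_coeff]
      rw [h1, hk.neg_one_pow, Polynomial.coeff_one_add_X_pow, mul_one]
    rw [this]
    have : (0 : ℤ) ≤ ((j + 0 : ℕ) : ℤ) * (j.choose k : ℤ) := by positivity
    linarith
  have hb := kraw_bound (j + m) j m (j + m - k) rfl hj hm (Or.inl (by omega))
  rw [Nat.choose_symm hkn] at hb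
  have habs : |kraw j m k| = |kraw j m (j + m - k)| := by
    rw [hr, abs_mul, abs_pow]; simp
  rw [← habs, Nat.cast_sub hkn] at hb
  have h2 : ((j + m : ℕ) : ℤ) * (-|kraw j m k|) ≤ (j + m : ℕ) * kraw j m k := by
    gcongr; exact neg_abs_le _
  linarith

/-! Fourier analysis on the cube -/

def sg (a b : Bool) : ℤ := if a && b then -1 else 1

def chi {n : ℕ} (J x : Fin n → Bool) : ℤ := ∏ i, sg (J i) (x i)

lemma chi_orth {n : ℕ} (x y : Fin n → Bool) :
    ∑ J, chi J x * chi J y = if x = y then 2 ^ n else 0 := by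
  have h : ∑ J : Fin n → Bool, chi J x * chi J y =
      ∏ i, ∑ b : Bool, sg b (x i) * sg b (y i) := by
    rw [Finset.prod_univ_sum, Fintype.piFinset_univ]
    simp only [chi, Finset.prod_mul_distrib]
  have h2 : ∀ a b : Bool, ∑ c : Bool, sg c a * sg c b = if a = b then 2 else 0 := by
    intro a b; cases a <;> cases b <;> simp [sg]
  rw [h]
  simp only [h2]
  split_ifs with hxy
  · subst hxy; simp
  · obtain ⟨i, hi⟩ := Function.ne_iff.mp hxy
    exact Finset.prod_eq_zero (Finset.mem_univ i) (by simp [hi])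

def wt {n : ℕ} (J : Fin n → Bool) : ℕ := (Finset.univ.filter fun i => J i = true).card

def wt' {n : ℕ} (J : Fin n → Bool) : ℕ := (Finset.univ.filter fun i => ¬ J i = true).card

lemma wt_add {n : ℕ} (J : Fin n → Bool) : wt J + wt' J = n := by
  unfold wt wt'
  rw [Finset.card_filter_add_card_filter_not]; simp

open Polynomial in
lemma chi_gen {n : ℕ} (J x : Fin n → Bool) :
    ∑ y, C (chi J y) * X ^ hammingDist x y =
      C (chi J x) * ((1 - X) ^ wt J * (1 + X) ^ wt' J : ℤ[X]) := by
  have h1 : ∀ y : Fin n → Bool, C (chi J y) * X ^ hammingDist x y =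
      ∏ i, (C (sg (J i) (y i)) * (if x i ≠ y i then (X : ℤ[X]) else 1)) := by
    intro y
    rw [Finset.prod_mul_distrib, Finset.prod_ite]
    simp [chi, hammingDist, map_prod]
  have h2 : (∑ y : Fin n → Bool, C (chi J y) * X ^ hammingDist x y : ℤ[X]) =
      ∏ i, ∑ b : Bool, (C (sg (J i) b) * (if x i ≠ b then (X : ℤ[X]) else 1)) := by
    rw [Finset.prod_univ_sum]
    simp only [h1, Fintype.piFinset_univ]
  have h3 : ((1 - X) ^ wt J * (1 + X) ^ wt' J : ℤ[X]) =
      ∏ i, if J i = true then (1 - X : ℤ[X]) else 1 + X := by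
    rw [Finset.prod_ite]
    simp [wt, wt']
  rw [h2, h3, chi, map_prod, ← Finset.prod_mul_distrib]
  refine Finset.prod_congr rfl fun i _ => ?_
  cases J i <;> cases x i <;> simp [sg] <;> ring

lemma chi_eigen {n : ℕ} (k : ℕ) (J x : Fin n → Bool) :
    ∑ y, (if hammingDist x y = k then chi J y else 0) = kraw (wt J) (wt' J) k * chi J x := by
  have h := congrArg (fun p => Polynomial.coeff p k) (chi_gen J x)
  simp only [Polynomial.finsetSum_coeff, Polynomial.coeff_C_mul, Polynomial.coeff_X_pow] at h
  rw [kraw, mul_comm, ← h]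
  refine Finset.sum_congr rfl fun y _ => ?_
  by_cases hy : hammingDist x y = k
  · simp [hy]
  · simp [hy, Ne.symm hy]

lemma sphere_card {n : ℕ} (k : ℕ) (x : Fin n → Bool) :
    ∑ y, (if hammingDist x y = k then (1 : ℤ) else 0) = n.choose k := by
  have h := chi_eigen k (fun _ => false) x
  have h1 : ∀ y : Fin n → Bool, chi (fun _ => false) y = 1 := by simp [chi, sg]
  have h2 : wt (fun _ : Fin n => false) = 0 := by simp [wt]
  have h3 : wt' (fun _ : Fin n => false) = n := by simp [wt']
  simpa only [h1, h2, h3, kraw_zero_left, mul_one] using h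

lemma chi_kernel {n : ℕ} (k : ℕ) (x y : Fin n → Bool) :
    ∑ J, kraw (wt J) (wt' J) k * (chi J x * chi J y) =
      if hammingDist x y = k then 2 ^ n else 0 := by
  calc ∑ J, kraw (wt J) (wt' J) k * (chi J x * chi J y)
      = ∑ J, ∑ z, (if hammingDist x z = k then chi J z else 0) * chi J y := by
        refine Finset.sum_congr rfl fun J _ => ?_
        rw [← mul_assoc, ← chi_eigen, Finset.sum_mul]
    _ = ∑ z, (if hammingDist x z = k then ∑ J, chi J z * chi J y else 0) := by
        rw [Finset.sum_comm]
        refine Finset.sum_congr rfl fun z _ => ?_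
        split_ifs <;> simp
    _ = _ := by
        simp only [chi_orth]
        rw [Finset.sum_eq_single y]
        · simp
        · intro b _ hb; simp [hb]
        · simp

/-- general expansion of a quadratic form -/
lemma quad_expand {n : ℕ} (f : (Fin n → Bool) → ℤ) (c : (Fin n → Bool) → ℤ) :
    ∑ J, c J * (∑ x, f x * chi J x) ^ 2 =
      ∑ x, ∑ y, f x * f y * ∑ J, c J * (chi J x * chi J y) := by
  simp only [sq, Finset.sum_mul_sum]
  simp only [Finset.mul_sum]
  rw [Finset.sum_comm]
  refine Finset.sum_congr rfl fun x _ => ?_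
  rw [Finset.sum_comm]
  refine Finset.sum_congr rfl fun y _ => Finset.sum_congr rfl fun J _ => ?_
  ring

lemma quad_lower {n k : ℕ} (hk : Even k) (hkn : k ≤ n) (hn : n < 2 * k)
    (f : (Fin n → Bool) → ℤ) (hf : ∀ x, f x * f x = 1) :
    -((2 * k - n) * (n.choose k : ℤ)) * 2 ^ n ≤
      n * ∑ x, ∑ y, (if hammingDist x y = k then f x * f y else 0) := by
  have e1 := quad_expand f (fun J => kraw (wt J) (wt' J) k)
  have e2 := quad_expand f (fun _ => 1)
  simp only [chi_kernel] at e1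
  simp only [one_mul, chi_orth, mul_ite, mul_zero, Finset.sum_ite_eq, Finset.mem_univ, if_true,
    hf] at e2
  simp only [Finset.sum_const, Finset.card_univ, Fintype.card_fun, Fintype.card_bool,
    Fintype.card_fin, nsmul_eq_mul] at e2
  push_cast at e2
  have e3 : ∑ x, ∑ y, f x * f y * (if hammingDist x y = k then (2 : ℤ) ^ n else 0) =
      2 ^ n * ∑ x, ∑ y, (if hammingDist x y = k then f x * f y else 0) := by
    simp only [Finset.mul_sum]
    refine Finset.sum_congr rfl fun x _ => Finset.sum_congr rfl fun y _ => ?_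
    split_ifs <;> ring
  rw [e3] at e1
  have h : ∑ J, -((2 * k - n) * (n.choose k : ℤ)) * (∑ x, f x * chi J x) ^ 2 ≤
      ∑ J, n * (kraw (wt J) (wt' J) k * (∑ x, f x * chi J x) ^ 2) := by
    refine Finset.sum_le_sum fun J _ => ?_
    rw [← mul_assoc]
    refine mul_le_mul_of_nonneg_right ?_ (sq_nonneg _)
    have h := kraw_lower (wt J) (wt' J) k hk (by rw [wt_add]; exact hkn) (by rw [wt_add]; exact hn)
    rw [wt_add] at h
    exact h
  rw [← Finset.mul_sum, ← Finset.mul_sum, e1] at h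
  rw [show ∑ J, (∑ x, f x * chi J x) ^ 2 = (2 : ℤ) ^ n * 2 ^ n from e2] at h
  have h2 : (0 : ℤ) < 2 ^ n := by positivity
  refine le_of_mul_le_mul_left ?_ h2
  linarith

/-- A cut contains at most a `k/n` fraction of pairs at distance `k`. -/
lemma cut_bound {n k : ℕ} (hk : Even k) (hkn : k ≤ n) (hn : n < 2 * k)
    (g : (Fin n → Bool) → Bool) :
    (n : ℤ) * ∑ x, ∑ y, (if hammingDist x y = k then (if g x ≠ g y then 1 else 0) else 0) ≤
      k * (n.choose k : ℤ) * 2 ^ n := by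
  have h := quad_lower hk hkn hn (fun x => if g x then -1 else 1) (by intro x; cases g x <;> simp)
  have e : ∑ x : Fin n → Bool, ∑ y, (if hammingDist x y = k then
      (if g x then (-1 : ℤ) else 1) * (if g y then -1 else 1) else 0) =
      ∑ x : Fin n → Bool, ∑ y, (if hammingDist x y = k then (1 : ℤ) else 0) -
      2 * ∑ x : Fin n → Bool, ∑ y,
        (if hammingDist x y = k then (if g x ≠ g y then 1 else 0) else 0) := by
    simp only [Finset.mul_sum, ← Finset.sum_sub_distrib]
    refine Finset.sum_congr rfl fun x _ => Finset.sum_congr rfl fun y _ => ?_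
    split_ifs with h1 h2 h3 h4 h5 h6 h7 <;> simp_all
  rw [e] at h
  simp only [sphere_card, Finset.sum_const, Finset.card_univ, Fintype.card_fun, Fintype.card_bool,
    Fintype.card_fin, nsmul_eq_mul] at h
  push_cast at h
  linarith

lemma lower_even {n k N M : ℕ} (hk : Even k) (hkn : k ≤ n) (hn : n < 2 * k)
    (c : (Fin n → Bool) → Fin N → Bool)
    (hc : ∀ x y, k ≤ hammingDist x y → M ≤ hammingDist (c x) (c y)) : n * M ≤ N * k := by
  have h1 : ∑ x : Fin n → Bool, ∑ y, (if hammingDist x y = k then (M : ℤ) else 0) ≤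
      ∑ x : Fin n → Bool, ∑ y, ∑ i,
        (if hammingDist x y = k then (if c x i ≠ c y i then (1 : ℤ) else 0) else 0) := by
    refine Finset.sum_le_sum fun x _ => Finset.sum_le_sum fun y _ => ?_
    split_ifs with h
    · have := hc x y h.ge
      rw [Finset.sum_boole]
      exact_mod_cast this
    · simp
  have h2 : ∑ x : Fin n → Bool, ∑ y, (if hammingDist x y = k then (M : ℤ) else 0) =
      M * (n.choose k * 2 ^ n) := by
    have : ∀ x : Fin n → Bool, ∑ y, (if hammingDist x y = k then (M : ℤ) else 0) =
        M * n.choose k := by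
      intro x
      rw [← sphere_card k x, Finset.mul_sum]
      simp
    simp only [this, Finset.sum_const, Finset.card_univ, Fintype.card_fun, Fintype.card_bool,
      Fintype.card_fin, nsmul_eq_mul]
    push_cast; ring
  have h3 : ∑ x : Fin n → Bool, ∑ y, ∑ i,
        (if hammingDist x y = k then (if c x i ≠ c y i then (1 : ℤ) else 0) else 0) =
      ∑ i, ∑ x : Fin n → Bool, ∑ y,
        (if hammingDist x y = k then (if c x i ≠ c y i then (1 : ℤ) else 0) else 0) := by
    rw [Finset.sum_comm]
    rw [Finset.sum_comm]
    conv_lhs => enter [2, x]; rw [Finset.sum_comm]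
    rw [Finset.sum_comm]
  rw [h2, h3] at h1
  have h4 : (n : ℤ) * ∑ i, ∑ x : Fin n → Bool, ∑ y,
        (if hammingDist x y = k then (if c x i ≠ c y i then (1 : ℤ) else 0) else 0) ≤
      N * (k * (n.choose k : ℤ) * 2 ^ n) := by
    rw [Finset.mul_sum]
    refine (Finset.sum_le_sum fun i _ => cut_bound hk hkn hn (fun x => c x i)).trans ?_
    simp
  have h5 : (0 : ℤ) < n.choose k * 2 ^ n := by
    have := Nat.choose_pos hkn
    positivity
  have h6 : ((n : ℤ) * M) * (n.choose k * 2 ^ n) ≤ (N * k) * (n.choose k * 2 ^ n) := by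
    have := mul_le_mul_of_nonneg_left h1 (Int.natCast_nonneg n)
    linarith
  exact_mod_cast le_of_mul_le_mul_right h6 h5

lemma cube_adj {n k : ℕ} (hk : 0 < k) (x y : Fin n → Bool) :
    (cubeGraph n k).Adj x y ↔ k ≤ hammingDist x y := by
  rw [cubeGraph, SimpleGraph.fromRel_adj, hammingDist_comm y x]
  constructor
  · rintro ⟨_, h | h⟩ <;> exact h
  · intro h
    refine ⟨?_, Or.inl h⟩
    rintro rfl
    simp at h
    omega

lemma hasCover_iff {V : Type*} (G : SimpleGraph V) (n k : ℕ) :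
    HasCover G n k ↔ ∃ c : V → Fin n → Bool, ∀ a b, G.Adj a b → k ≤ hammingDist (c a) (c b) := by
  constructor
  · rintro ⟨X, hX, hc⟩
    choose W hW using hX
    refine ⟨fun v i => decide (v ∈ W i), fun a b hab => (hc s(a, b) hab).trans ?_⟩
    refine Finset.card_le_card fun i hi => ?_
    simp only [Finset.mem_filter, Finset.mem_univ, true_and] at hi ⊢
    rw [hW i] at hi
    obtain ⟨_, u, v, huv, hu, hv⟩ := hi
    rcases Sym2.eq_iff.mp huv with ⟨rfl, rfl⟩ | ⟨rfl, rfl⟩ <;> simp [hu, hv]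
  · rintro ⟨c, hc⟩
    refine ⟨fun i => {e | e ∈ G.edgeSet ∧ ∃ a b, e = s(a, b) ∧ a ∈ {v | c v i = true} ∧
      b ∉ {v | c v i = true}}, fun i => ⟨_, rfl⟩, ?_⟩
    intro e he
    induction e using Sym2.ind with
    | _ a b =>
      refine (hc a b he).trans (Finset.card_le_card fun i hi => ?_)
      simp only [Finset.mem_filter, Finset.mem_univ, true_and] at hi ⊢
      refine ⟨he, ?_⟩
      cases ha : c a i
      · refine ⟨b, a, Sym2.eq_swap, ?_, ?_⟩
        · simp only [Set.mem_setOf_eq]; rw [ha] at hi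
          cases hb : c b i
          · exact absurd hb.symm hi
          · rfl
        · simp [ha]
      · refine ⟨a, b, rfl, ha, ?_⟩
        simp only [Set.mem_setOf_eq]
        intro hb; exact hi (ha.trans hb.symm)

lemma hammingDist_cons {n : ℕ} (a b : Bool) (x y : Fin n → Bool) :
    hammingDist (Fin.cons a x : Fin (n + 1) → Bool) (Fin.cons b y) =
      (if a ≠ b then 1 else 0) + hammingDist x y := by
  simp only [hammingDist, Finset.card_filter, Fin.sum_univ_succ, Fin.cons_zero, Fin.cons_succ]

def par {n : ℕ} (x : Fin n → Bool) : Bool := decide (Odd (∑ i, (x i).toNat))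

lemma par_dist {n : ℕ} (x y : Fin n → Bool) : par x ≠ par y ↔ Odd (hammingDist x y) := by
  have h : ∃ r, ∑ i, (x i).toNat + ∑ i, (y i).toNat = hammingDist x y + 2 * r := by
    refine ⟨∑ i, (x i && y i).toNat, ?_⟩
    rw [hammingDist, Finset.card_filter, Finset.mul_sum, ← Finset.sum_add_distrib,
      ← Finset.sum_add_distrib]
    refine Finset.sum_congr rfl fun i _ => ?_
    cases x i <;> cases y i <;> simp
  obtain ⟨r, hr⟩ := h
  simp only [par, ne_eq, decide_eq_decide, Nat.odd_iff]
  omega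

lemma cover_self {n k : ℕ} (hk : 0 < k) : HasCover (cubeGraph n k) n k := by
  rw [hasCover_iff]
  exact ⟨id, fun a b h => (cube_adj hk a b).1 h⟩

lemma cover_odd {n k : ℕ} (hk : Odd k) : HasCover (cubeGraph n k) (n + 1) (k + 1) := by
  rw [hasCover_iff]
  refine ⟨fun x => Fin.cons (par x) x, fun a b h => ?_⟩
  rw [cube_adj hk.pos] at h
  rw [hammingDist_cons]
  rcases h.eq_or_lt with h | h
  · rw [if_pos ((par_dist a b).2 (h ▸ hk))]; omega
  · omega

lemma lower_even' {n k N M : ℕ} (hk : Even k) (hkn : k ≤ n) (hn : n < 2 * k)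
    (h : HasCover (cubeGraph n k) N M) : n * M ≤ N * k := by
  rw [hasCover_iff] at h
  obtain ⟨c, hc⟩ := h
  exact lower_even hk hkn hn c fun x y hxy => hc x y ((cube_adj (by omega) x y).2 hxy)

lemma lower_odd' {n k N M : ℕ} (hk : Odd k) (hkn : k ≤ n) (hn : n < 2 * k)
    (h : HasCover (cubeGraph n k) N M) : (n + 1) * M ≤ N * (k + 1) := by
  rw [hasCover_iff] at h
  obtain ⟨c, hc⟩ := h
  refine lower_even hk.add_one (by omega) (by omega) (fun x => c (Fin.tail x)) fun x y hxy => ?_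
  refine hc _ _ ((cube_adj (by omega) _ _).2 ?_)
  have := hammingDist_cons (x 0) (y 0) (Fin.tail x) (Fin.tail y)
  rw [Fin.cons_self_tail, Fin.cons_self_tail] at this
  split_ifs at this <;> omega

/-- For `k ≤ n < 2k`: `x(Q_{n/k}) = n/k` if `k` is even, `(n+1)/(k+1)` if `k` is odd. -/
theorem cutCover_cube_eq (n k : ℕ) (hkn : k ≤ n) (hn : n < 2 * k) :
    (Even k → cutCover (cubeGraph n k) = (n : ℝ) / k) ∧
    (Odd k → cutCover (cubeGraph n k) = ((n : ℝ) + 1) / ((k : ℝ) + 1)) := by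
  constructor
  · intro hk
    refine IsLeast.csInf_eq ⟨⟨n, k, by omega, rfl, cover_self (by omega)⟩, ?_⟩
    rintro q ⟨N, M, hM, rfl, h⟩
    have := lower_even' hk hkn hn h
    rw [div_le_div_iff₀ (by exact_mod_cast (by omega : 0 < k)) (by exact_mod_cast hM)]
    exact_mod_cast this
  · intro hk
    refine IsLeast.csInf_eq ⟨⟨n + 1, k + 1, by omega, by push_cast; rfl, cover_odd hk⟩, ?_⟩
    rintro q ⟨N, M, hM, rfl, h⟩
    have := lower_odd' hk hkn hn h
    rw [div_le_div_iff₀ (by positivity) (by exact_mod_cast hM)]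
    exact_mod_cast this
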